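/- Suppose P{A∈(0,1]}=1; P{B>x} ~ a·x^c·e^{−bx} as x→∞ for some a,b>0 and c<−1; E[e^{bB}·1_{{A=1}}]<1; and for each y∈ℝ, P{Ay+B>x} ~ f(y)·P{B>x} as x→∞, where f is a nonnegative measurable function. Then there exist a constant c_Z>0 and a probability measure μ on ℝ concentrated on [0,∞) such that μ((x,∞)) ~ c_Z·P{B>x} as x→∞ and, for any random variable Z with distribution μ independent of (A,B), P{AZ+B>x} ≤ P{Z>x} for all x∈ℝ (i.e., AZ+B is stochastically dominated by Z). -/

import Mathlib

open MeasureTheory ProbabilityTheory Filter Finset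

/-!
Take for `Z` the variable `B` conditioned on `B > t`, with `t` large. For `x < t` the claim is
trivial, as `P (Z > x) = 1`; for `x ≥ t` it reads, after multiplication by `P (B > t)`,
`P (A W + B > x, W > t) ≤ P (B > x)` with `W` an independent copy of `B`. Split the left side
according to the size of `B`. On `B ≤ x / 2`, dominated convergence shows that the probability,
divided by `P (B > x)`, tends to `E [exp (b B); A = 1] < 1`: conditionally on `(A, B)` the ratio
tends to `exp (b B)` where `A = 1`, and to `0` where `A < 1` because the tail of `W` decays
exponentially. On `B > x / 2`, integrating over `B` first bounds the probability by
`K * E [exp (b W); W > t] * P (B > x)`, and this truncated moment is arbitrarily small for large `t`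
because `c < -1` makes `E [exp (b B)]` finite.
-/

open scoped ENNReal NNReal Topology
open Asymptotics Real

section ExponentialMoments

lemma tendsto_setLIntegral_Ioi_atTop_zero {ν : Measure ℝ} {g : ℝ → ℝ≥0∞}
    (hg : ∫⁻ w, g w ∂ν ≠ ∞) : Tendsto (fun t => ∫⁻ w in Set.Ioi t, g w ∂ν) atTop (𝓝 0) := by
  have hfin : ∀ t, ν.withDensity g (Set.Ioi t) ≠ ∞ := fun t => by
    rw [withDensity_apply _ measurableSet_Ioi]
    exact ne_top_of_le_ne_top hg (setLIntegral_le_lintegral _ _)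
  have hempty : ⋂ t : ℝ, Set.Ioi t = ∅ :=
    Set.eq_empty_of_forall_notMem fun w hw => lt_irrefl w (Set.mem_iInter.1 hw w)
  have hlim := tendsto_measure_iInter_atTop (μ := ν.withDensity g) (s := Set.Ioi)
    (fun _ => measurableSet_Ioi.nullMeasurableSet) (fun _ _ => Set.Ioi_subset_Ioi) ⟨0, hfin 0⟩
  rw [hempty, measure_empty] at hlim
  exact hlim.congr fun t => withDensity_apply _ measurableSet_Ioi

lemma lintegral_exp_ne_top_of_integrableOn {ν : Measure ℝ} [IsFiniteMeasure ν] {b : ℝ}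
    (hb : 0 ≤ b)
    (hν : IntegrableOn (fun u => ν.real (Set.Ioi u) * (b * exp (b * u))) (Set.Ici 0)) :
    ∫⁻ w, ENNReal.ofReal (exp (b * w)) ∂ν ≠ ∞ := by
  have hcake := lintegral_comp_eq_lintegral_meas_lt_mul ν (f := fun w => max w 0)
    (g := fun u => b * exp (b * u)) (ae_of_all _ fun w => le_max_right w 0) (by fun_prop)
    (fun u _ => Continuous.intervalIntegrable (by fun_prop) 0 u)
    (ae_of_all _ fun u => by positivity)
  have hprim : ∀ w, ∫ u in (0 : ℝ)..w, b * exp (b * u) = exp (b * w) - 1 := fun w => by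
    have hderiv : ∀ u ∈ Set.uIcc 0 w,
        HasDerivAt (fun u => exp (b * u)) (b * exp (b * u)) u := fun u _ => by
      simpa [mul_comm] using ((hasDerivAt_id u).const_mul b).exp
    rw [intervalIntegral.integral_eq_sub_of_hasDerivAt hderiv
      (Continuous.intervalIntegrable (by fun_prop) 0 w), mul_zero, exp_zero]
  have htail : ∫⁻ u in Set.Ioi 0, ν {w | u < max w 0} * ENNReal.ofReal (b * exp (b * u)) ≠ ∞ := by
    rw [setLIntegral_congr_fun measurableSet_Ioi
      (g := fun u => ENNReal.ofReal (ν.real (Set.Ioi u) * (b * exp (b * u)))) fun u hu => ?_]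
    · exact (hν.mono_set Set.Ioi_subset_Ici_self).lintegral_lt_top.ne
    · have hset : {w | u < max w 0} = Set.Ioi u := by
        ext w
        simp [(Set.mem_Ioi.1 hu).not_gt]
      simp only [hset]
      rw [ENNReal.ofReal_mul measureReal_nonneg, ofReal_measureReal]
  refine ne_top_of_le_ne_top (ENNReal.add_ne_top.2 ⟨htail, measure_ne_top ν Set.univ⟩) ?_
  rw [← hcake, ← lintegral_one, ← lintegral_add_right _ measurable_const]
  refine lintegral_mono fun w => ?_
  rw [hprim, ← ENNReal.ofReal_one, ← ENNReal.ofReal_add _ zero_le_one, sub_add_cancel]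
  · gcongr
    exact le_max_left w 0
  · exact sub_nonneg.2 (one_le_exp (by positivity))

lemma lintegral_exp_ne_top_of_isBigO {ν : Measure ℝ} [IsFiniteMeasure ν] {b c : ℝ}
    (hb : 0 ≤ b) (hc : c < -1)
    (hν : (fun x => ν.real (Set.Ioi x)) =O[atTop] fun x => x ^ c * exp (-b * x)) :
    ∫⁻ w, ENNReal.ofReal (exp (b * w)) ∂ν ≠ ∞ := by
  have hanti : Antitone fun u => ν.real (Set.Ioi u) := fun _ _ huv =>
    measureReal_mono (Set.Ioi_subset_Ioi huv)
  have hbigO : (fun u => ν.real (Set.Ioi u) * (b * exp (b * u))) =O[atTop] fun u => u ^ c := by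
    refine (hν.mul (isBigO_refl (fun u => b * exp (b * u)) atTop)).trans ?_
    refine (isBigO_const_mul_self b (fun u : ℝ => u ^ c) atTop).congr_left fun u => ?_
    rw [neg_mul, exp_neg]
    field_simp
  exact lintegral_exp_ne_top_of_integrableOn hb <|
    ((hanti.locallyIntegrable.locallyIntegrableOn _).mul_continuousOn (by fun_prop)
      isClosed_Ici.isLocallyClosed).integrableOn_of_isBigO_atTop hbigO
      (integrableAtFilter_rpow_atTop_iff.2 hc)

end ExponentialMoments

/-- A measure on `ℝ` with an exponential tail of index `b` (the class `𝓛(b)` of heavy-tail theory),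
whose tail ratios are moreover dominated, uniformly in shifts `y ≤ x / 2`, by their limits
`exp (b * y)`, and which has a finite exponential moment of order `b`. Tails and ratios are taken
in `ℝ≥0∞`; a vanishing tail is excluded since `0 / 0 = 0`. -/
structure HasDominatedExpTail (b : ℝ) (ν : Measure ℝ) : Prop where
  tendsto_ratio (y : ℝ) : Tendsto (fun x => ν (Set.Ioi (x - y)) / ν (Set.Ioi x)) atTop
    (𝓝 (ENNReal.ofReal (exp (b * y))))
  exists_shift_le : ∃ K : ℝ≥0, ∀ᶠ x in atTop, ∀ y ≤ x / 2,
    ν (Set.Ioi (x - y)) ≤ K * ENNReal.ofReal (exp (b * y)) * ν (Set.Ioi x)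
  lintegral_exp_ne_top : ∫⁻ w, ENNReal.ofReal (exp (b * w)) ∂ν ≠ ∞

section PowerTails

variable {a b c : ℝ}

lemma tendsto_rpow_mul_exp_shift_ratio (ha : a ≠ 0) (b c y : ℝ) :
    Tendsto (fun x : ℝ => (a * (x - y) ^ c * exp (-b * (x - y))) / (a * x ^ c * exp (-b * x)))
      atTop (𝓝 (exp (b * y))) := by
  have hratio : Tendsto (fun x : ℝ => (x - y) / x) atTop (𝓝 1) := by
    have hlim := (tendsto_inv_atTop_zero (𝕜 := ℝ)).const_mul y |>.const_sub 1
    rw [mul_zero, sub_zero] at hlim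
    refine hlim.congr' ?_
    filter_upwards [eventually_ne_atTop 0] with x hx
    field_simp
  have hlim := (hratio.rpow_const (p := c) (Or.inl one_ne_zero)).mul_const (exp (b * y))
  rw [one_rpow, one_mul] at hlim
  refine hlim.congr' ?_
  filter_upwards [eventually_gt_atTop 0, eventually_ge_atTop y] with x hx hxy
  have hexp : exp (-b * (x - y)) = exp (b * y) * exp (-b * x) := by
    rw [← exp_add]
    ring_nf
  rw [div_rpow (sub_nonneg.2 hxy) hx.le, hexp]
  field_simp

lemma rpow_mul_exp_shift_le (hc : c ≤ 0) {x y : ℝ} (hx : 0 < x) (hy : y ≤ x / 2) :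
    (x - y) ^ c * exp (-b * (x - y)) ≤ (1 / 2) ^ c * exp (b * y) * (x ^ c * exp (-b * x)) := by
  have hpow : (x - y) ^ c ≤ (1 / 2) ^ c * x ^ c := by
    rw [← mul_rpow (by norm_num) hx.le]
    exact rpow_le_rpow_of_nonpos (by positivity) (by linarith) hc
  calc (x - y) ^ c * exp (-b * (x - y))
      ≤ ((1 / 2) ^ c * x ^ c) * exp (-b * (x - y)) := by gcongr
    _ = ((1 / 2) ^ c * x ^ c) * (exp (b * y) * exp (-b * x)) := by
        rw [← exp_add]
        ring_nf
    _ = (1 / 2) ^ c * exp (b * y) * (x ^ c * exp (-b * x)) := by ring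

lemma exists_measure_Ioi_shift_le_of_isTheta {ν : Measure ℝ} [IsFiniteMeasure ν] (hc : c ≤ 0)
    (hν : (fun x => ν.real (Set.Ioi x)) =Θ[atTop] fun x => x ^ c * exp (-b * x)) :
    ∃ K : ℝ≥0, ∀ᶠ x in atTop, ∀ y ≤ x / 2,
      ν (Set.Ioi (x - y)) ≤ K * ENNReal.ofReal (exp (b * y)) * ν (Set.Ioi x) := by
  obtain ⟨C, hC, hupper⟩ := hν.1.exists_pos
  obtain ⟨D, hD, hlower⟩ := hν.2.exists_pos
  obtain ⟨X, hX⟩ := eventually_atTop.1 hupper.bound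
  refine ⟨(C * (1 / 2) ^ c * D).toNNReal, ?_⟩
  filter_upwards [hlower.bound, eventually_gt_atTop 0, eventually_ge_atTop (2 * X)]
    with x hlow hx hxX y hy
  have hxy : 0 < x - y := by linarith
  have hup := hX (x - y) (by linarith)
  rw [norm_of_nonneg measureReal_nonneg, norm_of_nonneg (by positivity)] at hup hlow
  rw [ENNReal.ofNNReal_toNNReal, ← ofReal_measureReal, ← ofReal_measureReal,
    ← ENNReal.ofReal_mul (by positivity), ← ENNReal.ofReal_mul (by positivity)]
  refine ENNReal.ofReal_le_ofReal ?_
  calc ν.real (Set.Ioi (x - y))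
      ≤ C * ((x - y) ^ c * exp (-b * (x - y))) := hup
    _ ≤ C * ((1 / 2) ^ c * exp (b * y) * (D * ν.real (Set.Ioi x))) := by
        grw [rpow_mul_exp_shift_le hc hx hy, hlow]
    _ = C * (1 / 2) ^ c * D * exp (b * y) * ν.real (Set.Ioi x) := by ring

lemma tendsto_measure_Ioi_shift_ratio_of_isEquivalent {ν : Measure ℝ} [IsFiniteMeasure ν]
    (ha : 0 < a)
    (hν : (fun x => ν.real (Set.Ioi x)) ~[atTop] fun x => a * x ^ c * exp (-b * x)) (y : ℝ) :
    Tendsto (fun x => ν (Set.Ioi (x - y)) / ν (Set.Ioi x)) atTop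
      (𝓝 (ENNReal.ofReal (exp (b * y)))) := by
  have hshift : Tendsto (fun x : ℝ => x - y) atTop atTop :=
    tendsto_atTop_add_const_right atTop (-y) tendsto_id
  have hlim := (((hν.comp_tendsto hshift).div hν).symm.tendsto_nhds
    (tendsto_rpow_mul_exp_shift_ratio ha.ne' b c y))
  have hpos : ∀ᶠ x in atTop, ν.real (Set.Ioi x) ≠ 0 := by
    filter_upwards [hν.symm.isBigO.eq_zero_imp, eventually_gt_atTop 0] with x hzero hx htail
    exact (by positivity : a * x ^ c * exp (-b * x) ≠ 0) (hzero htail)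
  refine (ENNReal.tendsto_ofReal hlim).congr' ?_
  filter_upwards [hpos] with x hx
  simp only [Function.comp_apply, Pi.div_apply]
  rw [ENNReal.ofReal_div_of_pos (measureReal_nonneg.lt_of_ne' hx), ofReal_measureReal,
    ofReal_measureReal]

lemma hasDominatedExpTail_of_isEquivalent {ν : Measure ℝ} [IsFiniteMeasure ν] (ha : 0 < a)
    (hb : 0 ≤ b) (hc : c < -1)
    (hν : (fun x => ν.real (Set.Ioi x)) ~[atTop] fun x => a * x ^ c * exp (-b * x)) :
    HasDominatedExpTail b ν := by
  have htheta : (fun x => ν.real (Set.Ioi x)) =Θ[atTop] fun x => x ^ c * exp (-b * x) := by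
    refine hν.isTheta.trans ?_
    simp only [mul_assoc]
    exact (isTheta_const_mul_left ha.ne').2 (isTheta_refl _ _)
  exact ⟨tendsto_measure_Ioi_shift_ratio_of_isEquivalent ha hν,
    exists_measure_Ioi_shift_le_of_isTheta (by linarith) htheta,
    lintegral_exp_ne_top_of_isBigO hb hc htheta.1⟩

end PowerTails

namespace HasDominatedExpTail

variable {b : ℝ} {ν : Measure ℝ}

lemma measure_Ioi_ne_zero (hν : HasDominatedExpTail b ν) (x : ℝ) : ν (Set.Ioi x) ≠ 0 := by
  intro hx
  refine ENNReal.ofReal_ne_zero_iff.2 (exp_pos (b * 0)) <|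
    tendsto_nhds_unique (hν.tendsto_ratio 0) (tendsto_const_nhds.congr' ?_)
  filter_upwards [eventually_ge_atTop x] with u hu
  rw [sub_zero, measure_mono_null (Set.Ioi_subset_Ioi hu) hx, ENNReal.zero_div]

lemma tendsto_ratio_zero (hν : HasDominatedExpTail b ν) (hb : 0 < b) {g : ℝ → ℝ}
    (hg : Tendsto (fun x => g x - x) atTop atTop) :
    Tendsto (fun x => ν (Set.Ioi (g x)) / ν (Set.Ioi x)) atTop (𝓝 0) := by
  have hexp : Tendsto (fun y => ENNReal.ofReal (exp (b * y))) atBot (𝓝 0) := by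
    simpa using ENNReal.tendsto_ofReal
      (tendsto_exp_atBot.comp (tendsto_id.const_mul_atBot hb))
  refine ENNReal.tendsto_nhds_zero.2 fun ε hε => ?_
  obtain ⟨y, hy⟩ := (hexp.eventually_lt_const hε).exists
  filter_upwards [(hν.tendsto_ratio y).eventually_lt_const hy, hg.eventually_ge_atTop (-y)]
    with x hx hgx
  refine le_trans ?_ hx.le
  gcongr
  linarith

lemma restrict_Ioi_section_le {α β θ x : ℝ} (hθ : 0 < θ) (hα : α ≤ θ) :
    ν.restrict (Set.Ioi 0) {z | β ≤ x / 2 ∧ x < α * z + β} ≤ ν (Set.Ioi ((x - β) / θ)) := by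
  rw [Measure.restrict_apply' measurableSet_Ioi]
  refine measure_mono fun z ⟨⟨_, hz⟩, hz0⟩ => ?_
  have hαz : α * z ≤ θ * z := mul_le_mul_of_nonneg_right hα (le_of_lt hz0)
  rw [Set.mem_Ioi, div_lt_iff₀' hθ]
  linarith

lemma tendsto_section_ratio_of_lt_one (hν : HasDominatedExpTail b ν) (hb : 0 < b) {α : ℝ}
    (hα : α < 1) (β : ℝ) :
    Tendsto (fun x => ν.restrict (Set.Ioi 0) {z | β ≤ x / 2 ∧ x < α * z + β} / ν (Set.Ioi x))
      atTop (𝓝 0) := by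
  obtain ⟨θ, hθ, hθ1⟩ := exists_between (max_lt hα zero_lt_one)
  obtain ⟨hαθ, hθ0⟩ := max_lt_iff.1 hθ
  have hdiverge : Tendsto (fun x => (x - β) / θ - x) atTop atTop := by
    have hslope : 0 < θ⁻¹ - 1 := sub_pos.2 ((one_lt_inv₀ hθ0).2 hθ1)
    refine (tendsto_atTop_add_const_right _ (-(β / θ))
      (tendsto_id.const_mul_atTop hslope)).congr fun x => ?_
    simp only [id_eq]
    ring
  refine tendsto_of_tendsto_of_tendsto_of_le_of_le tendsto_const_nhds
    (hν.tendsto_ratio_zero hb hdiverge) (fun _ => zero_le) fun x => ?_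
  exact ENNReal.div_le_div_right (restrict_Ioi_section_le hθ0 hαθ.le) _

lemma tendsto_section_ratio_one (hν : HasDominatedExpTail b ν) (β : ℝ) :
    Tendsto (fun x => ν.restrict (Set.Ioi 0) {z | β ≤ x / 2 ∧ x < 1 * z + β} / ν (Set.Ioi x))
      atTop (𝓝 (ENNReal.ofReal (exp (b * β)))) := by
  refine (hν.tendsto_ratio β).congr' ?_
  filter_upwards [eventually_ge_atTop (2 * β), eventually_ge_atTop 0] with x hβ hx
  have hset : {z | β ≤ x / 2 ∧ x < 1 * z + β} ∩ Set.Ioi 0 = Set.Ioi (x - β) := by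
    ext z
    simp only [one_mul, Set.mem_inter_iff, Set.mem_ofPred_eq, Set.mem_Ioi]
    constructor
    · rintro ⟨⟨-, hz⟩, -⟩
      linarith
    · intro hz
      refine ⟨⟨?_, ?_⟩, ?_⟩ <;> linarith
  rw [Measure.restrict_apply' measurableSet_Ioi, hset]

lemma eventually_section_ratio_le (hν : HasDominatedExpTail b ν) :
    ∃ K : ℝ≥0, ∀ᶠ x in atTop, ∀ α ≤ 1, ∀ β,
      ν.restrict (Set.Ioi 0) {z | β ≤ x / 2 ∧ x < α * z + β} / ν (Set.Ioi x) ≤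
        K * ENNReal.ofReal (exp (b * β)) := by
  obtain ⟨K, hK⟩ := hν.exists_shift_le
  refine ⟨K, hK.mono fun x hx α hα β => ENNReal.div_le_of_le_mul ?_⟩
  by_cases hβ : β ≤ x / 2
  · refine le_trans ?_ (hx β hβ)
    simpa only [div_one] using restrict_Ioi_section_le zero_lt_one hα
  · simp [hβ]

section RandomAffineMap

variable {Ω : Type*} [MeasurableSpace Ω] {P : Measure Ω} {A B : Ω → ℝ}

lemma tendsto_prod_small_jump_ratio [SFinite ν] (hν : HasDominatedExpTail b ν) (hb : 0 < b)
    (hA : Measurable A) (hB : Measurable B) (hA1 : ∀ᵐ ω ∂P, A ω ≤ 1)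
    (hexp : ∫⁻ ω, ENNReal.ofReal (exp (b * B ω)) ∂P ≠ ∞) :
    Tendsto (fun x => P.prod (ν.restrict (Set.Ioi 0))
      {p | B p.1 ≤ x / 2 ∧ x < A p.1 * p.2 + B p.1} / ν (Set.Ioi x)) atTop
      (𝓝 (∫⁻ ω in {ω | A ω = 1}, ENNReal.ofReal (exp (b * B ω)) ∂P)) := by
  obtain ⟨K, hK⟩ := hν.eventually_section_ratio_le
  have hmeas : ∀ x, MeasurableSet {p : Ω × ℝ | B p.1 ≤ x / 2 ∧ x < A p.1 * p.2 + B p.1} :=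
    fun x => by measurability
  have hdct := tendsto_lintegral_filter_of_dominated_convergence (μ := P) (l := atTop)
    (F := fun x ω => ν.restrict (Set.Ioi 0) {z | B ω ≤ x / 2 ∧ x < A ω * z + B ω} / ν (Set.Ioi x))
    (f := {ω | A ω = 1}.indicator fun ω => ENNReal.ofReal (exp (b * B ω)))
    (fun ω => K * ENNReal.ofReal (exp (b * B ω)))
    (Eventually.of_forall fun x => (measurable_measure_prodMk_left (hmeas x)).div_const _)
    (hK.mono fun x hx => hA1.mono fun ω hω => hx _ hω _)
    (by
      rw [lintegral_const_mul _ (by fun_prop)]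
      exact ENNReal.mul_ne_top ENNReal.coe_ne_top hexp)
    (hA1.mono fun ω hω => ?_)
  · rw [lintegral_indicator (measurableSet_eq_fun hA measurable_const)] at hdct
    refine hdct.congr fun x => ?_
    rw [Measure.prod_apply (hmeas x), ENNReal.div_eq_inv_mul,
      ← lintegral_const_mul _ (measurable_measure_prodMk_left (hmeas x))]
    exact lintegral_congr fun ω => ENNReal.div_eq_inv_mul
  · rcases hω.lt_or_eq with hlt | heq
    · simpa [hlt.ne] using hν.tendsto_section_ratio_of_lt_one hb hlt (B ω)
    · simpa [heq] using hν.tendsto_section_ratio_one (B ω)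

lemma exists_prod_big_jump_le [SFinite P] (hBtail : HasDominatedExpTail b (P.map B))
    (hb : 0 ≤ b) (hA : Measurable A) (hB : Measurable B) (hA1 : ∀ᵐ ω ∂P, A ω ≤ 1) :
    ∃ K : ℝ≥0, ∀ᶠ x in atTop, ∀ (ρ : Measure ℝ) [SFinite ρ], (∀ᵐ w ∂ρ, 0 ≤ w) →
      P.prod ρ {p | x / 2 < B p.1 ∧ x < A p.1 * p.2 + B p.1} ≤
        K * (∫⁻ w, ENNReal.ofReal (exp (b * w)) ∂ρ) * P.map B (Set.Ioi x) := by
  obtain ⟨K, hK⟩ := hBtail.exists_shift_le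
  refine ⟨K, hK.mono fun x hx ρ _ hρ => ?_⟩
  have hmeas : MeasurableSet {p : Ω × ℝ | x / 2 < B p.1 ∧ x < A p.1 * p.2 + B p.1} := by
    measurability
  have hsection : ∀ᵐ w ∂ρ, P {ω | x / 2 < B ω ∧ x < A ω * w + B ω} ≤
      K * ENNReal.ofReal (exp (b * w)) * P.map B (Set.Ioi x) := by
    filter_upwards [hρ] with w hw
    -- On `x / 2 < B` the shift `w` may be cut off at `x / 2`, where the tail ratio is dominated.
    calc P {ω | x / 2 < B ω ∧ x < A ω * w + B ω}
        ≤ P.map B (Set.Ioi (x - min w (x / 2))) := by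
          rw [Measure.map_apply hB measurableSet_Ioi]
          refine measure_mono_ae (hA1.mono fun ω hω ⟨hlarge, hsum⟩ => ?_)
          have hAw : A ω * w ≤ w := mul_le_of_le_one_left hw hω
          change x - min w (x / 2) < B ω
          rcases min_choice w (x / 2) with hmin | hmin <;> linarith
      _ ≤ K * ENNReal.ofReal (exp (b * min w (x / 2))) * P.map B (Set.Ioi x) :=
          hx _ (min_le_right w (x / 2))
      _ ≤ K * ENNReal.ofReal (exp (b * w)) * P.map B (Set.Ioi x) := by
          gcongr
          exact min_le_left w (x / 2)
  rw [Measure.prod_apply_symm hmeas, ← lintegral_const_mul _ (by fun_prop),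
    ← lintegral_mul_const _ (by fun_prop)]
  exact lintegral_mono_ae hsection

lemma eventually_prod_small_jump_le [IsFiniteMeasure P]
    (hBtail : HasDominatedExpTail b (P.map B)) (hb : 0 < b) (hA : Measurable A)
    (hB : Measurable B) (hA1 : ∀ᵐ ω ∂P, A ω ≤ 1) {q : ℝ≥0∞}
    (hq : ∫⁻ ω in {ω | A ω = 1}, ENNReal.ofReal (exp (b * B ω)) ∂P < q) :
    ∀ᶠ x in atTop, P.prod ((P.map B).restrict (Set.Ioi 0))
      {p | B p.1 ≤ x / 2 ∧ x < A p.1 * p.2 + B p.1} ≤ q * P.map B (Set.Ioi x) := by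
  have hexp : ∫⁻ ω, ENNReal.ofReal (exp (b * B ω)) ∂P ≠ ∞ := by
    rw [← lintegral_map (f := fun w => ENNReal.ofReal (exp (b * w))) (by fun_prop) hB]
    exact hBtail.lintegral_exp_ne_top
  exact ((hBtail.tendsto_prod_small_jump_ratio hb hA hB hA1 hexp).eventually_le_const hq).mono
    fun x => (ENNReal.div_le_iff (hBtail.measure_Ioi_ne_zero x) (measure_ne_top _ _)).1

lemma eventually_prod_big_jump_le [SFinite P]
    (hBtail : HasDominatedExpTail b (P.map B)) (hb : 0 ≤ b) (hA : Measurable A)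
    (hB : Measurable B) (hA1 : ∀ᵐ ω ∂P, A ω ≤ 1) {ε : ℝ≥0∞} (hε : 0 < ε) :
    ∀ᶠ t in atTop, ∀ x ≥ t, P.prod ((P.map B).restrict (Set.Ioi t))
      {p | x / 2 < B p.1 ∧ x < A p.1 * p.2 + B p.1} ≤ ε * P.map B (Set.Ioi x) := by
  obtain ⟨K, hbig⟩ := exists_prod_big_jump_le hBtail hb hA hB hA1
  have hmoment : Tendsto (fun t => K * ∫⁻ w in Set.Ioi t, ENNReal.ofReal (exp (b * w)) ∂P.map B)
      atTop (𝓝 0) := by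
    simpa only [mul_zero] using ENNReal.Tendsto.const_mul
      (tendsto_setLIntegral_Ioi_atTop_zero hBtail.lintegral_exp_ne_top)
      (Or.inr (ENNReal.coe_ne_top (r := K)))
  filter_upwards [eventually_forall_ge_atTop.2 hbig, hmoment.eventually_le_const hε,
    eventually_ge_atTop 0] with t hbig_t hmoment_t ht x hx
  have hnonneg : ∀ᵐ w ∂(P.map B).restrict (Set.Ioi t), 0 ≤ w :=
    (ae_restrict_mem measurableSet_Ioi).mono fun w hw => ht.trans (le_of_lt hw)
  exact (hbig_t x hx _ hnonneg).trans (mul_le_mul_left hmoment_t _)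

lemma exists_prod_restrict_le [IsFiniteMeasure P] (hBtail : HasDominatedExpTail b (P.map B))
    (hb : 0 < b) (hA : Measurable A) (hB : Measurable B) (hA1 : ∀ᵐ ω ∂P, A ω ≤ 1)
    (hmom : ∫⁻ ω in {ω | A ω = 1}, ENNReal.ofReal (exp (b * B ω)) ∂P < 1) :
    ∃ t, 0 ≤ t ∧ ∀ x ≥ t, P.prod ((P.map B).restrict (Set.Ioi t))
      {p | x < A p.1 * p.2 + B p.1} ≤ P.map B (Set.Ioi x) := by
  obtain ⟨q, hq, hq1⟩ := exists_between hmom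
  obtain ⟨t, hsmall, hbig, ht⟩ := ((eventually_forall_ge_atTop.2
    (eventually_prod_small_jump_le hBtail hb hA hB hA1 hq)).and
    ((eventually_prod_big_jump_le hBtail hb.le hA hB hA1 (tsub_pos_of_lt hq1)).and
      (eventually_ge_atTop 0))).exists
  refine ⟨t, ht, fun x hx => ?_⟩
  have hle : (P.map B).restrict (Set.Ioi t) ≤ (P.map B).restrict (Set.Ioi 0) :=
    Measure.restrict_mono (Set.Ioi_subset_Ioi ht) le_rfl
  calc P.prod ((P.map B).restrict (Set.Ioi t)) {p | x < A p.1 * p.2 + B p.1}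
      ≤ P.prod ((P.map B).restrict (Set.Ioi t))
          ({p | B p.1 ≤ x / 2 ∧ x < A p.1 * p.2 + B p.1} ∪
            {p | x / 2 < B p.1 ∧ x < A p.1 * p.2 + B p.1}) :=
        measure_mono fun p hp => (le_or_gt (B p.1) (x / 2)).imp (⟨·, hp⟩) (⟨·, hp⟩)
    _ ≤ q * P.map B (Set.Ioi x) + (1 - q) * P.map B (Set.Ioi x) :=
        (measure_union_le _ _).trans <|
          add_le_add ((Measure.prod_mono le_rfl hle _).trans (hsmall x hx)) (hbig x hx)
    _ = P.map B (Set.Ioi x) := by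
        rw [← add_mul, add_tsub_cancel_of_le hq1.le, one_mul]

lemma exists_prod_cond_le [IsProbabilityMeasure P] (hBtail : HasDominatedExpTail b (P.map B))
    (hb : 0 < b) (hA : Measurable A) (hB : Measurable B) (hA1 : ∀ᵐ ω ∂P, A ω ≤ 1)
    (hmom : ∫⁻ ω in {ω | A ω = 1}, ENNReal.ofReal (exp (b * B ω)) ∂P < 1) :
    ∃ t, 0 ≤ t ∧ ∀ x, P.prod (P.map B)[|Set.Ioi t] {p | x < A p.1 * p.2 + B p.1} ≤
      (P.map B)[|Set.Ioi t] (Set.Ioi x) := by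
  obtain ⟨t, ht, hle⟩ := exists_prod_restrict_le hBtail hb hA hB hA1 hmom
  refine ⟨t, ht, fun x => ?_⟩
  have := cond_isProbabilityMeasure (hBtail.measure_Ioi_ne_zero t)
  rcases lt_or_ge x t with hxt | hxt
  · refine prob_le_one.trans_eq ?_
    rw [cond_apply measurableSet_Ioi, Set.Ioi_inter_Ioi, sup_eq_left.2 hxt.le,
      ENNReal.inv_mul_cancel (hBtail.measure_Ioi_ne_zero t) (measure_ne_top _ _)]
  · rw [cond_apply measurableSet_Ioi, Set.Ioi_inter_Ioi, sup_eq_right.2 hxt, ProbabilityTheory.cond,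
      Measure.prod_smul_right, Measure.smul_apply, smul_eq_mul]
    gcongr
    exact hle x hxt

end RandomAffineMap

end HasDominatedExpTail

theorem stmt_15_general {Ω : Type*} [MeasurableSpace Ω] {P : Measure Ω} [IsProbabilityMeasure P]
    {A B : Ω → ℝ} (hA : Measurable A) (hB : Measurable B) (hA1 : ∀ᵐ ω ∂P, A ω ≤ 1) {b : ℝ}
    (hb : 0 < b) (hBtail : HasDominatedExpTail b (P.map B))
    (hmomB : ∫⁻ ω in {ω | A ω = 1}, ENNReal.ofReal (exp (b * B ω)) ∂P < 1) :
    ∃ (cZ : ℝ) (μ : Measure ℝ), 0 < cZ ∧ IsProbabilityMeasure μ ∧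
      μ (Set.Iio 0) = 0 ∧
      Tendsto (fun x : ℝ => (μ (Set.Ioi x)).toReal / (cZ * (P {ω | B ω > x}).toReal)) atTop (𝓝 1) ∧
      ∀ x : ℝ, P.prod μ {p : Ω × ℝ | A p.1 * p.2 + B p.1 > x} ≤ μ (Set.Ioi x) := by
  obtain ⟨t, ht, hdom⟩ := hBtail.exists_prod_cond_le hb hA hB hA1 hmomB
  have hpos : ∀ x, 0 < (P.map B (Set.Ioi x)).toReal := fun x =>
    ENNReal.toReal_pos (hBtail.measure_Ioi_ne_zero x) (measure_ne_top _ _)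
  refine ⟨((P.map B (Set.Ioi t)).toReal)⁻¹, (P.map B)[|Set.Ioi t], inv_pos.2 (hpos t),
    cond_isProbabilityMeasure (hBtail.measure_Ioi_ne_zero t), ?_, ?_, hdom⟩
  · have hempty : Set.Ioi t ∩ Set.Iio 0 = ∅ :=
      Set.disjoint_left.2 (fun z hzt hz0 => (ht.trans_lt hzt).not_gt hz0) |>.inter_eq
    rw [cond_apply measurableSet_Ioi, hempty, measure_empty, mul_zero]
  · refine tendsto_const_nhds.congr' ?_
    filter_upwards [eventually_ge_atTop t] with x hx
    have hpre : {ω | B ω > x} = B ⁻¹' Set.Ioi x := rfl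
    rw [hpre, ← Measure.map_apply hB measurableSet_Ioi, cond_apply measurableSet_Ioi,
      Set.Ioi_inter_Ioi, sup_eq_right.2 hx, ENNReal.toReal_mul, ENNReal.toReal_inv,
      div_self (mul_pos (inv_pos.2 (hpos t)) (hpos x)).ne']

theorem stmt_15
    {Ω : Type*} [MeasureSpace Ω] [IsProbabilityMeasure (ℙ : Measure Ω)]
    (A B : Ω → ℝ)
    (hA : Measurable A) (hB : Measurable B)
    (hA01 : ℙ {ω | A ω ∈ Set.Ioc (0 : ℝ) 1} = 1)
    (a b c : ℝ) (ha : 0 < a) (hb : 0 < b) (hc : c < -1)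
    (hBtail : Tendsto (fun x : ℝ =>
      (ℙ {ω | B ω > x}).toReal / (a * x ^ c * Real.exp (-b * x))) atTop (nhds 1))
    (f : ℝ → ℝ) (hf : Measurable f) (hf0 : ∀ y, 0 ≤ f y)
    (htailAB : ∀ y : ℝ, Tendsto (fun x : ℝ =>
      (ℙ {ω | A ω * y + B ω > x}).toReal / (ℙ {ω | B ω > x}).toReal)
      atTop (nhds (f y)))
    (hmomB : ∫⁻ ω in {ω | A ω = 1}, ENNReal.ofReal (Real.exp (b * B ω)) ∂ℙ < 1) :
    ∃ (cZ : ℝ) (μ : Measure ℝ), 0 < cZ ∧ IsProbabilityMeasure μ ∧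
      μ (Set.Iio 0) = 0 ∧
      Tendsto (fun x : ℝ =>
        (μ (Set.Ioi x)).toReal / (cZ * (ℙ {ω | B ω > x}).toReal)) atTop (nhds 1) ∧
      ∀ x : ℝ, (Measure.prod ℙ μ) {p : Ω × ℝ | A p.1 * p.2 + B p.1 > x} ≤
        μ (Set.Ioi x) := by
  have hA1 : ∀ᵐ ω ∂(ℙ : Measure Ω), A ω ≤ 1 := by
    filter_upwards [(mem_ae_iff_prob_eq_one (hA measurableSet_Ioc)).2 hA01] with ω hω using hω.2
  have htail : HasDominatedExpTail b (Measure.map B ℙ) :=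
    hasDominatedExpTail_of_isEquivalent ha hb.le hc <| isEquivalent_of_tendsto_one <|
      hBtail.congr fun x => by
        rw [Pi.div_apply, map_measureReal_apply hB measurableSet_Ioi]
        rfl
  exact stmt_15_general hA hB hA1 hb htail hmomB
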